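/- Shortcutting cannot increase the Fréchet distance to a line segment: let Q : [0,1] → ℝ^d be a linearly parametrized line segment and P : [0,1] → ℝ^d any continuous curve, and let S be the linearly parametrized line segment from P(0) to P(1). Then d_F(Q, S) ≤ d_F(Q, P). -/

import Mathlib

/-!
Every reparametrization fixes `0` and `1`, so the cost of any matching of the segment `uv` to `P`
is at least `‖u - P 0‖` and `‖v - P 1‖`. Conversely, matching `uv` linearly to the segment from
`P 0` to `P 1` costs at most the maximum of these two numbers, by convexity of the norm
(`norm_seg_sub_seg_le`). Continuity of `P` makes the suprema genuine (`bddAbove_seg_sub`).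
-/

open Set

noncomputable section

/-- Points in `ℝ^d`. -/
abbrev Pt (d : ℕ) : Type := EuclideanSpace ℝ (Fin d)

/-- A reparametrization: a continuous strictly increasing bijection of `[0,1]` onto itself. -/
def IsReparam (γ : ℝ → ℝ) : Prop :=
  ContinuousOn γ (Icc 0 1) ∧ StrictMonoOn γ (Icc 0 1) ∧ γ '' Icc 0 1 = Icc 0 1

/-- The Fréchet distance `d_F(P,Q) = inf_γ sup_{t ∈ [0,1]} ‖P(γ(t)) - Q(t)‖`
(only the values of the curves on `[0,1]` are relevant). -/
def frechetDist {d : ℕ} (P Q : ℝ → Pt d) : ℝ :=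
  ⨅ γ : {γ : ℝ → ℝ // IsReparam γ}, ⨆ s : Icc (0:ℝ) 1, ‖P (γ.1 s.1) - Q s.1‖

/-- The linearly parametrized line segment from `a` to `b`. -/
def seg {d : ℕ} (a b : Pt d) : ℝ → Pt d := fun s => (1 - s) • a + s • b

/-- The subcurve `P[a,b]` of `P`, linearly reparametrized over `[0,1]`. -/
def subcurve {d : ℕ} (P : ℝ → Pt d) (a b : ℝ) : ℝ → Pt d := fun s => P (a + s * (b - a))

/-- The polygonal curve with vertex sequence `pts 0, …, pts n`, uniformly
parametrized over `[0,1]`. -/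
def polyline {d n : ℕ} (pts : Fin (n + 1) → Pt d) : ℝ → Pt d := fun s =>
  if h : n = 0 then pts 0
  else
    let i : ℕ := min ⌊s * n⌋₊ (n - 1)
    have hi : i < n := lt_of_le_of_lt (min_le_right _ _) (by omega)
    (1 - (s * n - i)) • pts ⟨i, hi.trans n.lt_succ_self⟩ +
      (s * n - i) • pts ⟨i + 1, Nat.succ_lt_succ hi⟩

/-- `f ∈ 𝕏^d_ℓ`: `f` is a polygonal curve with at most `ℓ` vertices. -/
def IsPolygonal {d : ℕ} (f : ℝ → Pt d) (ℓ : ℕ) : Prop :=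
  ∃ n : ℕ, n + 1 ≤ ℓ ∧ ∃ pts : Fin (n + 1) → Pt d, f = polyline pts

/-- Concatenation of two curves (each parametrized over `[0,1]`). -/
def concat {d : ℕ} (f g : ℝ → Pt d) : ℝ → Pt d := fun s =>
  if s ≤ 1 / 2 then f (2 * s) else g (2 * s - 1)

/-- `CostLE P m t C Δ` states that the clustering cost satisfies `φ(P,C) ≤ Δ`:
there is a family `I` of index pairs `(i,j)`, `1 ≤ i < j ≤ m`, with
`⋃_{(i,j) ∈ I} [t i, t j] = [0,1]`, such that every corresponding subcurve is
within Fréchet distance `Δ` of some center in `C`. -/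
def CostLE {d : ℕ} (P : ℝ → Pt d) (m : ℕ) (t : ℕ → ℝ) (C : Set (ℝ → Pt d)) (Δ : ℝ) : Prop :=
  ∃ I : Set (ℕ × ℕ),
    (∀ q ∈ I, 1 ≤ q.1 ∧ q.1 < q.2 ∧ q.2 ≤ m) ∧
    (⋃ q ∈ I, Icc (t q.1) (t q.2)) = Icc (0:ℝ) 1 ∧
    ∀ q ∈ I, ∃ c ∈ C, frechetDist (subcurve P (t q.1) (t q.2)) c ≤ Δ

/-- The set `r_Q` of the set system `R` (ground set `{1,…,m−1}`):
`r_Q = {z : ∃ i ≤ z < j, d_F(Q, P[t_i,t_j]) ≤ Δ}`. -/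
def rSet {d : ℕ} (P : ℝ → Pt d) (m : ℕ) (t : ℕ → ℝ) (Δ : ℝ) (Q : ℝ → Pt d) : Set ℕ :=
  {z | 1 ≤ z ∧ z < m ∧ ∃ i j, 1 ≤ i ∧ i ≤ z ∧ z < j ∧ j ≤ m ∧
    frechetDist Q (subcurve P (t i) (t j)) ≤ Δ}

theorem IsReparam.id : IsReparam (fun t => t) :=
  ⟨continuousOn_id, fun _ _ _ _ h => h, image_id _⟩

theorem IsReparam.map_zero {γ : ℝ → ℝ} (h : IsReparam γ) : γ 0 = 0 := by
  obtain ⟨-, hm, hi⟩ := h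
  have h0 : (0:ℝ) ∈ Icc (0:ℝ) 1 := by simp
  obtain ⟨x, hx, hx0⟩ : (0:ℝ) ∈ γ '' Icc 0 1 := by rwa [hi]
  have h1 : γ 0 ∈ Icc (0:ℝ) 1 := hi ▸ mem_image_of_mem γ h0
  exact le_antisymm ((hm.monotoneOn h0 hx hx.1).trans_eq hx0) h1.1

theorem IsReparam.map_one {γ : ℝ → ℝ} (h : IsReparam γ) : γ 1 = 1 := by
  obtain ⟨-, hm, hi⟩ := h
  have h0 : (1:ℝ) ∈ Icc (0:ℝ) 1 := by simp
  obtain ⟨x, hx, hx1⟩ : (1:ℝ) ∈ γ '' Icc 0 1 := by rwa [hi]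
  have h1 : γ 1 ∈ Icc (0:ℝ) 1 := hi ▸ mem_image_of_mem γ h0
  exact le_antisymm h1.2 (hx1.symm.trans_le (hm.monotoneOn hx h0 hx.2))

/-- Without this bound the supremum in `frechetDist` would take the junk value `0`. -/
theorem bddAbove_seg_sub {d : ℕ} (u v : Pt d) {P : ℝ → Pt d}
    (hP : ContinuousOn P (Icc 0 1)) {γ : ℝ → ℝ} (hγ : IsReparam γ) :
    BddAbove (range fun s : Icc (0:ℝ) 1 => ‖seg u v (γ s.1) - P s.1‖) := by
  have hc : ContinuousOn (fun s => ‖seg u v (γ s) - P s‖) (Icc (0:ℝ) 1) := by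
    have := hγ.1
    unfold seg
    fun_prop
  obtain ⟨C, hC⟩ := isCompact_Icc.bddAbove_image hc
  refine ⟨C, ?_⟩
  rintro _ ⟨s, rfl⟩
  exact hC (mem_image_of_mem _ s.2)

/-- Two segments with matched linear parametrizations are farthest apart at an endpoint. -/
theorem norm_seg_sub_seg_le {d : ℕ} {u v a b : Pt d} {r s : ℝ} (hs : s ∈ Icc (0:ℝ) 1)
    (h0 : ‖u - a‖ ≤ r) (h1 : ‖v - b‖ ≤ r) : ‖seg u v s - seg a b s‖ ≤ r := by
  have e : seg u v s - seg a b s = (1 - s) • (u - a) + s • (v - b) := by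
    simp only [seg, smul_sub]
    abel
  have hs' : 0 ≤ 1 - s := sub_nonneg.2 hs.2
  calc ‖seg u v s - seg a b s‖
      ≤ ‖(1 - s) • (u - a)‖ + ‖s • (v - b)‖ := e ▸ norm_add_le _ _
    _ = (1 - s) * ‖u - a‖ + s * ‖v - b‖ := by
        rw [norm_smul, norm_smul, Real.norm_of_nonneg hs', Real.norm_of_nonneg hs.1]
    _ ≤ (1 - s) * r + s * r := by
        have := hs.1
        gcongr
    _ = r := by ring

/-- Shortcutting cannot increase the Fréchet distance to a line segment. -/
theorem frechetDist_shortcut {d : ℕ} (u v : Pt d) (P : ℝ → Pt d)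
    (hP : ContinuousOn P (Icc 0 1)) :
    frechetDist (seg u v) (seg (P 0) (P 1)) ≤ frechetDist (seg u v) P := by
  have : Nonempty {γ : ℝ → ℝ // IsReparam γ} := ⟨⟨_, IsReparam.id⟩⟩
  refine le_ciInf fun γ => ?_
  have hB := bddAbove_seg_sub u v hP γ.2
  have h0 := le_ciSup hB ⟨0, by simp⟩
  have h1 := le_ciSup hB ⟨1, by simp⟩
  have e0 : seg u v 0 = u := by simp [seg]
  have e1 : seg u v 1 = v := by simp [seg]
  simp only [γ.2.map_zero, e0] at h0
  simp only [γ.2.map_one, e1] at h1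
  -- The infimum over reparametrizations is bounded below by `0`; evaluate it at the identity.
  refine (ciInf_le ⟨0, ?_⟩ ⟨_, IsReparam.id⟩).trans ?_
  · rintro _ ⟨δ, rfl⟩
    exact Real.iSup_nonneg fun _ => norm_nonneg _
  · exact ciSup_le fun s => norm_seg_sub_seg_le s.2 h0 h1
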